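/- Let K be a field, t ∈ K^×, and suppose (K,t) separates Std(P_n). Fix an integer e ≥ 2, let λ be an ℓ-multipartition of n, let 1 ≤ r < n, and let s ∈ Std(λ) be such that u = s(r,r+1) is standard; set i = res(s) ∈ I^n. Let α_r(s), α_r(u) ∈ K be scalars satisfying α_r(s)·α_r(u) = ([1+ρ_r(s)]_t [1+ρ_r(u)]_t)/([ρ_r(s)]_t [ρ_r(u)]_t), and define β_r(s) = t^{î_r − c_r(s)} α_r(s)/[1−ρ_r(s)]_t if i_r = i_{r+1}, β_r(s) = t^{c_{r+1}(s) − î_r} α_r(s) [ρ_r(s)]_t if i_r = i_{r+1}+1, and β_r(s) = t^{−ρ_r(s)} α_r(s) [ρ_r(s)]_t/[1−ρ_r(s)]_t otherwise, and define β_r(u) by the same formulas with u in place of s (note res(u) = s_r·i). Then: β_r(s)β_r(u) = t^{c_r(s)+c_{r+1}(s)−î_r−î_{r+1}} [1−ρ_r(s)]_t [1+ρ_r(s)]_t if i_r ⇄ i_{r+1}; β_r(s)β_r(u) = t^{c_{r+1}(s)−î_{r+1}} [1+ρ_r(s)]_t if i_r → i_{r+1}; β_r(s)β_r(u) = t^{c_r(s)−î_r}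 [1−ρ_r(s)]_t if i_r ← i_{r+1}; β_r(s)β_r(u) = −t^{2î_r−2c_{r+1}(s)}/([ρ_r(s)]_t)² if i_r = i_{r+1}; and β_r(s)β_r(u) = 1 otherwise. -/

import Mathlib

open scoped BigOperators
open scoped Classical

namespace Paper

/-! ## Quantum integers -/

/-- The quantum integer `[d]_x` in a field, for `d ∈ ℤ`. -/
noncomputable def qint {K : Type*} [Field K] (x : K) (d : ℤ) : K :=
  if 0 ≤ d then ∑ k ∈ Finset.range d.toNat, x ^ k
  else -∑ k ∈ Finset.range (-d).toNat, x ^ (-((k : ℤ) + 1))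

/-- The quantum integer `[d]_t` in a commutative ring, for an invertible `t` and `d ∈ ℤ`. -/
def qintU {O : Type*} [CommRing O] (t : Oˣ) (d : ℤ) : O :=
  if 0 ≤ d then ∑ k ∈ Finset.range d.toNat, (t : O) ^ k
  else -∑ k ∈ Finset.range (-d).toNat, ((t ^ (-((k : ℤ) + 1)) : Oˣ) : O)

/-! ## Nodes, multipartitions and standard tableaux -/

/-- A node `(l, r, c)`: component `l`, row `r`, column `c` (all `0`-based). -/
abbrev Node : Type := ℕ × ℕ × ℕ

/-- `nodeBelow A B` holds when `B` is strictly below `A`, i.e. `A < B` lexicographically. -/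
def nodeBelow (A B : Node) : Prop :=
  A.1 < B.1 ∨ (A.1 = B.1 ∧ (A.2.1 < B.2.1 ∨ (A.2.1 = B.2.1 ∧ A.2.2 < B.2.2)))

/-- An `ℓ`-multipartition of `n`. -/
structure Multipartition (ℓ n : ℕ) : Type where
  part : ℕ → ℕ → ℕ
  comp_bound : ∀ l, ℓ ≤ l → ∀ r, part l r = 0
  antitone : ∀ l, Antitone (part l)
  row_bound : ∀ l r, n ≤ r → part l r = 0
  size : (∑ l ∈ Finset.range ℓ, ∑ r ∈ Finset.range n, part l r) = n

/-- The diagram of a multipartition. -/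
def Multipartition.diagram {ℓ n : ℕ} (μ : Multipartition ℓ n) : Set Node :=
  {A | A.2.2 < μ.part A.1 A.2.1}

/-- A standard tableau: a bijection from the diagram of its shape onto `{1, …, n}`
that increases along rows and down columns of each component (it takes the value
`0` off the diagram, so that it is determined by its entries). -/
structure StdTableau (ℓ n : ℕ) : Type where
  shape : Multipartition ℓ n
  entry : Node → ℕ
  entry_zero : ∀ A, A ∉ shape.diagram → entry A = 0
  bijOn : Set.BijOn entry shape.diagram (Set.Icc 1 n)
  row_inc : ∀ l r c, (l, r, c + 1) ∈ shape.diagram → entry (l, r, c) < entry (l, r, c + 1)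
  col_inc : ∀ l r c, (l, r + 1, c) ∈ shape.diagram → entry (l, r, c) < entry (l, r + 1, c)

/-- The node of a standard tableau containing the entry `k`. -/
noncomputable def StdTableau.node {ℓ n : ℕ} (T : StdTableau ℓ n) (k : ℕ) : Node :=
  Function.invFunOn T.entry T.shape.diagram k

/-- The content `c_k(T) = κ_l + c - r` of the entry `k` in the tableau `T`
(`1 ≤ k ≤ n`). -/
noncomputable def content {ℓ n : ℕ} (κ : ℕ → ℤ) (T : StdTableau ℓ n) (k : ℕ) : ℤ :=
  κ (T.node k).1 + ((T.node k).2.2 : ℤ) - ((T.node k).2.1 : ℤ)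

/-- The residue sequence of a standard tableau, in `I^n` with `I = ℤ/eℤ`. -/
noncomputable def resSeq {ℓ n : ℕ} (e : ℕ) (κ : ℕ → ℤ) (T : StdTableau ℓ n) :
    Fin n → ZMod e :=
  fun k => ((content κ T (k.1 + 1) : ℤ) : ZMod e)

/-- The residue of a node. -/
def resNode (e : ℕ) (κ : ℕ → ℤ) (A : Node) : ZMod e :=
  ((κ A.1 + (A.2.2 : ℤ) - (A.2.1 : ℤ) : ℤ) : ZMod e)

/-- A set of nodes is the diagram of a multipartition (with at most `ℓ` components)
iff it is finite and downward closed in rows and columns. -/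
def IsDiagramSet (ℓ : ℕ) (S : Set Node) : Prop :=
  S.Finite ∧ (∀ A ∈ S, A.1 < ℓ) ∧
    (∀ l r c, (l, r, c + 1) ∈ S → (l, r, c) ∈ S) ∧
    (∀ l r c, (l, r + 1, c) ∈ S → (l, r, c) ∈ S)

/-- `A` is an addable node of the diagram `S`. -/
def Addable (ℓ : ℕ) (S : Set Node) (A : Node) : Prop :=
  A ∉ S ∧ IsDiagramSet ℓ (S ∪ {A})

/-- `A` is a removable node of the diagram `S`. -/
def Removable (ℓ : ℕ) (S : Set Node) (A : Node) : Prop :=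
  A ∈ S ∧ IsDiagramSet ℓ (S \ {A})

/-- `d_A(S)`: the number of addable nodes of `S` of the same residue as `A` strictly
below `A`, minus the number of removable ones. -/
noncomputable def dNode (ℓ e : ℕ) (κ : ℕ → ℤ) (S : Set Node) (A : Node) : ℤ :=
  (Set.ncard {B | Addable ℓ S B ∧ resNode e κ B = resNode e κ A ∧ nodeBelow A B} : ℤ) -
    (Set.ncard {B | Removable ℓ S B ∧ resNode e κ B = resNode e κ A ∧ nodeBelow A B} : ℤ)

/-- The Brundan–Kleshchev–Wang degree `deg_e(T)` of a standard tableau, written as the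
telescoping sum of the recursion `deg_e(T) = deg_e(T↓(n-1)) + d_A(Shape(T))`. -/
noncomputable def degE {ℓ n : ℕ} (e : ℕ) (κ : ℕ → ℤ) (T : StdTableau ℓ n) : ℤ :=
  ∑ m ∈ Finset.Icc 1 n,
    dNode ℓ e κ {A | A ∈ T.shape.diagram ∧ T.entry A ≤ m} (T.node m)

/-- The restriction of the diagram of `T` to entries `≤ m` (the diagram of `Shape(T↓m)`). -/
def restDiag {ℓ n : ℕ} (T : StdTableau ℓ n) (m : ℕ) : Set Node :=
  {A | A ∈ T.shape.diagram ∧ T.entry A ≤ m}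

/-- Dominance order on standard tableaux: `domTab S T` iff `S ⊵ T`. -/
def domTab {ℓ n : ℕ} (S T : StdTableau ℓ n) : Prop :=
  ∀ m l i : ℕ,
    Set.ncard {A | A ∈ restDiag T m ∧ (A.1 < l ∨ (A.1 = l ∧ A.2.1 ≤ i))} ≤
      Set.ncard {A | A ∈ restDiag S m ∧ (A.1 < l ∨ (A.1 = l ∧ A.2.1 ≤ i))}

/-- Interchange the entries `r` and `r + 1` in an entry function. -/
def swapEntry (f : Node → ℕ) (r : ℕ) : Node → ℕ :=
  fun A => if f A = r then r + 1 else if f A = r + 1 then r else f A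

/-- `ρ_r(T) = c_r(T) - c_{r+1}(T)`, the axial distance. -/
noncomputable def rhoTab {ℓ n : ℕ} (κ : ℕ → ℤ) (T : StdTableau ℓ n) (r : ℕ) : ℤ :=
  content κ T r - content κ T (r + 1)

/-- The entry function of the row-reading initial tableau `t^λ`. -/
noncomputable def tlamEntry {ℓ n : ℕ} (μ : Multipartition ℓ n) (A : Node) : ℕ :=
  if A ∈ μ.diagram then
    (∑ l ∈ Finset.range A.1, ∑ r ∈ Finset.range n, μ.part l r) +
      (∑ r ∈ Finset.range A.2.1, μ.part A.1 r) + A.2.2 + 1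
  else 0

/-- The finite set of possible contents of standard tableaux of size `n`. -/
noncomputable def contFinset (ℓ n : ℕ) (κ : ℕ → ℤ) : Finset ℤ :=
  ((Finset.range ℓ ×ˢ Finset.range n ×ˢ Finset.range n).image
      (fun x => κ x.1 + (x.2.2 : ℤ) - (x.2.1 : ℤ))).filter
    (fun c => ∃ T : StdTableau ℓ n, ∃ k, 1 ≤ k ∧ k ≤ n ∧ content κ T k = c)

/-- The standard tableau (if any) obtained from `T` by interchanging the entries
`r` and `r + 1`; i.e. `T·s_r` if it is standard, and `none` otherwise. -/
noncomputable def oSwapO {ℓ n : ℕ} (T : StdTableau ℓ n) (r : ℕ) :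
    Option (StdTableau ℓ n) :=
  if h : ∃ V : StdTableau ℓ n, V.entry = swapEntry T.entry r then some (Classical.choose h)
  else none

/-- `oSwap` extended to `Option`. -/
noncomputable def oSwap {ℓ n : ℕ} (X : Option (StdTableau ℓ n)) (r : ℕ) :
    Option (StdTableau ℓ n) :=
  X.bind fun T => oSwapO T r

/-- Evaluate a seminormal coefficient system on an optional tableau (by `0` if none). -/
noncomputable def aE {ℓ n : ℕ} {K : Type*} [Field K] (α : ℕ → StdTableau ℓ n → K) (r : ℕ)
    (X : Option (StdTableau ℓ n)) : K :=
  X.elim 0 (α r)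

/-! ## Separation and idempotent subrings -/

/-- `(K, t)` separates `Std(P_n)` (field version):
`[n]!_t ∏_{1 ≤ l < m ≤ ℓ} ∏_{-n < d < n} [κ_l - κ_m + d]_t ≠ 0`. -/
def SeparatesF {K : Type*} [Field K] (t : Kˣ) (n ℓ : ℕ) (κ : ℕ → ℤ) : Prop :=
  ((∏ d ∈ Finset.Icc 1 n, qint (t : K) (d : ℤ)) *
      ∏ l ∈ Finset.range ℓ, ∏ m ∈ Finset.Ioo l ℓ,
        ∏ d ∈ Finset.Ioo (-(n : ℤ)) (n : ℤ), qint (t : K) (κ l - κ m + d)) ≠ 0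

/-- `(O, t)` separates `Std(P_n)` (subring version): the separation element is a unit. -/
def SeparatesU {O : Type*} [CommRing O] (t : Oˣ) (n ℓ : ℕ) (κ : ℕ → ℤ) : Prop :=
  IsUnit ((∏ d ∈ Finset.Icc 1 n, qintU t (d : ℤ)) *
      ∏ l ∈ Finset.range ℓ, ∏ m ∈ Finset.Ioo l ℓ,
        ∏ d ∈ Finset.Ioo (-(n : ℤ)) (n : ℤ), qintU t (κ l - κ m + d))

/-- `(O, t)` is an `e`-idempotent subring of the field `K`. -/
def IsIdempotentSubring {K : Type*} [Field K] (O : Subring K) (t : Oˣ) (e n ℓ : ℕ)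
    (κ : ℕ → ℤ) : Prop :=
  SeparatesU t n ℓ κ ∧
    (∀ k : ℤ, ¬(e : ℤ) ∣ k → IsUnit (qintU t k)) ∧
    (∀ k : ℤ, (e : ℤ) ∣ k → qintU t k ∈ Ideal.jacobson (⊥ : Ideal O))

/-! ## The cyclotomic Hecke algebra, by generators and relations -/

/-- Generators `L_1, …, L_n`, `T_1, …, T_{n-1}` (here `0`-based). -/
inductive HeckeGen (n : ℕ) : Type
  | L : Fin n → HeckeGen n
  | T : Fin (n - 1) → HeckeGen n

/-- The position `r` of the pair `(r, r+1)` interchanged by the `r`-th transposition. -/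
def pL {n : ℕ} (r : Fin (n - 1)) : Fin n := ⟨r.1, by have := r.2; omega⟩

/-- The position `r + 1` of the pair interchanged by the `r`-th transposition. -/
def pR {n : ℕ} (r : Fin (n - 1)) : Fin n := ⟨r.1 + 1, by have := r.2; omega⟩

/-- The position `r + 2`, used in braid relations. -/
def pM {n : ℕ} (r : Fin (n - 1)) (hr : r.1 + 1 < n - 1) : Fin n := ⟨r.1 + 2, by omega⟩

/-- The free algebra generator `L_k`. -/
def hL (R : Type*) [CommRing R] {n : ℕ} (k : Fin n) : FreeAlgebra R (HeckeGen n) :=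
  FreeAlgebra.ι R (HeckeGen.L k)

/-- The free algebra generator `T_r`. -/
def hT (R : Type*) [CommRing R] {n : ℕ} (r : Fin (n - 1)) : FreeAlgebra R (HeckeGen n) :=
  FreeAlgebra.ι R (HeckeGen.T r)

/-- The defining relations of the integral cyclotomic Hecke algebra `H_n(R, t, κ)`. -/
inductive HeckeRel (R : Type*) [CommRing R] (t : Rˣ) (n ℓ : ℕ) (κ : ℕ → ℤ) :
    FreeAlgebra R (HeckeGen n) → FreeAlgebra R (HeckeGen n) → Prop
  | cyc (h : 0 < n) :
      HeckeRel R t n ℓ κ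
        (((List.range ℓ).map fun l =>
          hL R (⟨0, h⟩ : Fin n) - algebraMap R _ (qintU t (κ l))).prod) 0
  | quad (r : Fin (n - 1)) :
      HeckeRel R t n ℓ κ ((hT R r + 1) * (hT R r - algebraMap R _ (t : R))) 0
  | LL (k m : Fin n) : HeckeRel R t n ℓ κ (hL R k * hL R m) (hL R m * hL R k)
  | TTfar (r s : Fin (n - 1)) (h : r.1 + 1 < s.1 ∨ s.1 + 1 < r.1) :
      HeckeRel R t n ℓ κ (hT R r * hT R s) (hT R s * hT R r)
  | braid (r s : Fin (n - 1)) (h : s.1 = r.1 + 1) :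
      HeckeRel R t n ℓ κ (hT R r * hT R s * hT R r) (hT R s * hT R r * hT R s)
  | TL (r : Fin (n - 1)) (k : Fin n) (h : k.1 ≠ r.1 ∧ k.1 ≠ r.1 + 1) :
      HeckeRel R t n ℓ κ (hT R r * hL R k) (hL R k * hT R r)
  | LT (r : Fin (n - 1)) :
      HeckeRel R t n ℓ κ (hL R (pR r) * (hT R r - algebraMap R _ (t : R) + 1))
        (hT R r * hL R (pL r) + 1)

/-- The integral cyclotomic Hecke algebra of type `A`, `H_n(R, t, κ)`. -/
noncomputable abbrev CycHecke (R : Type*) [CommRing R] (t : Rˣ) (n ℓ : ℕ) (κ : ℕ → ℤ) :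
    Type _ :=
  RingQuot (HeckeRel R t n ℓ κ)

/-- The generator `L_k` of the cyclotomic Hecke algebra. -/
noncomputable def Lgen (R : Type*) [CommRing R] (t : Rˣ) (n ℓ : ℕ) (κ : ℕ → ℤ)
    (k : Fin n) : CycHecke R t n ℓ κ :=
  RingQuot.mkAlgHom R (HeckeRel R t n ℓ κ) (hL R k)

/-- The generator `T_r` of the cyclotomic Hecke algebra. -/
noncomputable def Tgen (R : Type*) [CommRing R] (t : Rˣ) (n ℓ : ℕ) (κ : ℕ → ℤ)
    (r : Fin (n - 1)) : CycHecke R t n ℓ κ :=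
  RingQuot.mkAlgHom R (HeckeRel R t n ℓ κ) (hT R r)

end Paper
/-! ## Quiver Hecke (KLR) algebras, by generators and relations -/

namespace Paper

/-- Generators `e(i)` (`i ∈ I^n`), `ψ_1, …, ψ_{n-1}`, `y_1, …, y_n` (here `0`-based). -/
inductive KLRGen (n e : ℕ) : Type
  | idem : (Fin n → ZMod e) → KLRGen n e
  | psi : Fin (n - 1) → KLRGen n e
  | y : Fin n → KLRGen n e

/-- The free algebra generator `e(i)`. -/
def kE (R : Type*) [CommRing R] {n e : ℕ} (i : Fin n → ZMod e) :
    FreeAlgebra R (KLRGen n e) :=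
  FreeAlgebra.ι R (KLRGen.idem i)

/-- The free algebra generator `ψ_r`. -/
def kPsi (R : Type*) [CommRing R] {n e : ℕ} (r : Fin (n - 1)) :
    FreeAlgebra R (KLRGen n e) :=
  FreeAlgebra.ι R (KLRGen.psi r)

/-- The free algebra generator `y_k`. -/
def kY (R : Type*) [CommRing R] {n e : ℕ} (k : Fin n) : FreeAlgebra R (KLRGen n e) :=
  FreeAlgebra.ι R (KLRGen.y k)

/-- `s_r · i`: interchange the entries of `i` at positions `r` and `r + 1`. -/
def swapSeq {n e : ℕ} (i : Fin n → ZMod e) (r : Fin (n - 1)) : Fin n → ZMod e :=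
  fun k => if k = pL r then i (pR r) else if k = pR r then i (pL r) else i k

/-- The defining relations of the cyclotomic quiver Hecke algebra `R_n^Λ(R)` where
`Λ = Σ_l Λ_{κ_l mod e}`. -/
inductive KLRRel (R : Type*) [CommRing R] (n e ℓ : ℕ) [NeZero e] (κ : ℕ → ℤ) :
    FreeAlgebra R (KLRGen n e) → FreeAlgebra R (KLRGen n e) → Prop
  | cyc (h : 0 < n) (i : Fin n → ZMod e) :
      KLRRel R n e ℓ κ
        ((kY R (⟨0, h⟩ : Fin n)) ^
            (((Finset.range ℓ).filter fun l => ((κ l : ZMod e) = i ⟨0, h⟩)).card) *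
          kE R i) 0
  | orth (i j : Fin n → ZMod e) (h : i ≠ j) : KLRRel R n e ℓ κ (kE R i * kE R j) 0
  | idem (i : Fin n → ZMod e) : KLRRel R n e ℓ κ (kE R i * kE R i) (kE R i)
  | complete : KLRRel R n e ℓ κ (∑ i : Fin n → ZMod e, kE R i) 1
  | yE (k : Fin n) (i : Fin n → ZMod e) :
      KLRRel R n e ℓ κ (kY R k * kE R i) (kE R i * kY R k)
  | psiE (r : Fin (n - 1)) (i : Fin n → ZMod e) :
      KLRRel R n e ℓ κ (kPsi R r * kE R i) (kE R (swapSeq i r) * kPsi R r)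
  | yy (k m : Fin n) : KLRRel R n e ℓ κ (kY R k * kY R m) (kY R m * kY R k)
  | psiyEq (r : Fin (n - 1)) (i : Fin n → ZMod e) (h : i (pL r) = i (pR r)) :
      KLRRel R n e ℓ κ (kPsi R r * kY R (pR r) * kE R i)
        ((kY R (pL r) * kPsi R r + 1) * kE R i)
  | psiyNe (r : Fin (n - 1)) (i : Fin n → ZMod e) (h : i (pL r) ≠ i (pR r)) :
      KLRRel R n e ℓ κ (kPsi R r * kY R (pR r) * kE R i)
        (kY R (pL r) * kPsi R r * kE R i)
  | ypsiEq (r : Fin (n - 1)) (i : Fin n → ZMod e) (h : i (pL r) = i (pR r)) :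
      KLRRel R n e ℓ κ (kY R (pR r) * kPsi R r * kE R i)
        ((kPsi R r * kY R (pL r) + 1) * kE R i)
  | ypsiNe (r : Fin (n - 1)) (i : Fin n → ZMod e) (h : i (pL r) ≠ i (pR r)) :
      KLRRel R n e ℓ κ (kY R (pR r) * kPsi R r * kE R i)
        (kPsi R r * kY R (pL r) * kE R i)
  | psiyFar (r : Fin (n - 1)) (k : Fin n) (h : k.1 ≠ r.1 ∧ k.1 ≠ r.1 + 1) :
      KLRRel R n e ℓ κ (kPsi R r * kY R k) (kY R k * kPsi R r)
  | psipsiFar (r s : Fin (n - 1)) (h : r.1 + 1 < s.1 ∨ s.1 + 1 < r.1) :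
      KLRRel R n e ℓ κ (kPsi R r * kPsi R s) (kPsi R s * kPsi R r)
  | quadEq (r : Fin (n - 1)) (i : Fin n → ZMod e) (h : i (pL r) = i (pR r)) :
      KLRRel R n e ℓ κ (kPsi R r ^ 2 * kE R i) 0
  | quadR (r : Fin (n - 1)) (i : Fin n → ZMod e)
      (h1 : i (pR r) = i (pL r) + 1) (h2 : i (pL r) ≠ i (pR r) + 1) :
      KLRRel R n e ℓ κ (kPsi R r ^ 2 * kE R i) ((kY R (pL r) - kY R (pR r)) * kE R i)
  | quadL (r : Fin (n - 1)) (i : Fin n → ZMod e)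
      (h1 : i (pL r) = i (pR r) + 1) (h2 : i (pR r) ≠ i (pL r) + 1) :
      KLRRel R n e ℓ κ (kPsi R r ^ 2 * kE R i) ((kY R (pR r) - kY R (pL r)) * kE R i)
  | quadBoth (r : Fin (n - 1)) (i : Fin n → ZMod e)
      (h1 : i (pR r) = i (pL r) + 1) (h2 : i (pL r) = i (pR r) + 1) :
      KLRRel R n e ℓ κ (kPsi R r ^ 2 * kE R i)
        ((kY R (pR r) - kY R (pL r)) * (kY R (pL r) - kY R (pR r)) * kE R i)
  | quadNone (r : Fin (n - 1)) (i : Fin n → ZMod e) (h1 : i (pL r) ≠ i (pR r))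
      (h2 : i (pR r) ≠ i (pL r) + 1) (h3 : i (pL r) ≠ i (pR r) + 1) :
      KLRRel R n e ℓ κ (kPsi R r ^ 2 * kE R i) (kE R i)
  | braidR (r : Fin (n - 1)) (hr : r.1 + 1 < n - 1) (i : Fin n → ZMod e)
      (h0 : i (pM r hr) = i (pL r)) (h1 : i (pR r) = i (pL r) + 1)
      (h2 : i (pL r) ≠ i (pR r) + 1) :
      KLRRel R n e ℓ κ (kPsi R r * kPsi R ⟨r.1 + 1, hr⟩ * kPsi R r * kE R i)
        ((kPsi R ⟨r.1 + 1, hr⟩ * kPsi R r * kPsi R ⟨r.1 + 1, hr⟩ - 1) * kE R i)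
  | braidL (r : Fin (n - 1)) (hr : r.1 + 1 < n - 1) (i : Fin n → ZMod e)
      (h0 : i (pM r hr) = i (pL r)) (h1 : i (pL r) = i (pR r) + 1)
      (h2 : i (pR r) ≠ i (pL r) + 1) :
      KLRRel R n e ℓ κ (kPsi R r * kPsi R ⟨r.1 + 1, hr⟩ * kPsi R r * kE R i)
        ((kPsi R ⟨r.1 + 1, hr⟩ * kPsi R r * kPsi R ⟨r.1 + 1, hr⟩ + 1) * kE R i)
  | braidBoth (r : Fin (n - 1)) (hr : r.1 + 1 < n - 1) (i : Fin n → ZMod e)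
      (h0 : i (pM r hr) = i (pL r)) (h1 : i (pR r) = i (pL r) + 1)
      (h2 : i (pL r) = i (pR r) + 1) :
      KLRRel R n e ℓ κ (kPsi R r * kPsi R ⟨r.1 + 1, hr⟩ * kPsi R r * kE R i)
        ((kPsi R ⟨r.1 + 1, hr⟩ * kPsi R r * kPsi R ⟨r.1 + 1, hr⟩ +
            kY R (pL r) - 2 * kY R (pR r) + kY R (pM r hr)) * kE R i)
  | braidNone (r : Fin (n - 1)) (hr : r.1 + 1 < n - 1) (i : Fin n → ZMod e)
      (h : ¬(i (pM r hr) = i (pL r) ∧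
        (i (pR r) = i (pL r) + 1 ∨ i (pL r) = i (pR r) + 1))) :
      KLRRel R n e ℓ κ (kPsi R r * kPsi R ⟨r.1 + 1, hr⟩ * kPsi R r * kE R i)
        (kPsi R ⟨r.1 + 1, hr⟩ * kPsi R r * kPsi R ⟨r.1 + 1, hr⟩ * kE R i)

/-- The cyclotomic quiver Hecke algebra `R_n^Λ(R)`, `Λ = Σ_l Λ_{κ_l mod e}`. -/
noncomputable abbrev KLR (R : Type*) [CommRing R] (n e ℓ : ℕ) [NeZero e] (κ : ℕ → ℤ) :
    Type _ :=
  RingQuot (KLRRel R n e ℓ κ)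

/-- The generator `e(i)` of the cyclotomic quiver Hecke algebra. -/
noncomputable def KeGen (R : Type*) [CommRing R] (n e ℓ : ℕ) [NeZero e] (κ : ℕ → ℤ)
    (i : Fin n → ZMod e) : KLR R n e ℓ κ :=
  RingQuot.mkAlgHom R (KLRRel R n e ℓ κ) (kE R i)

/-- The generator `ψ_r` of the cyclotomic quiver Hecke algebra. -/
noncomputable def KpsiGen (R : Type*) [CommRing R] (n e ℓ : ℕ) [NeZero e] (κ : ℕ → ℤ)
    (r : Fin (n - 1)) : KLR R n e ℓ κ :=
  RingQuot.mkAlgHom R (KLRRel R n e ℓ κ) (kPsi R r)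

/-- The generator `y_k` of the cyclotomic quiver Hecke algebra. -/
noncomputable def KyGen (R : Type*) [CommRing R] (n e ℓ : ℕ) [NeZero e] (κ : ℕ → ℤ)
    (k : Fin n) : KLR R n e ℓ κ :=
  RingQuot.mkAlgHom R (KLRRel R n e ℓ κ) (kY R k)

end Paper
/-! ## The deformed cyclotomic quiver Hecke algebra -/

namespace Paper

/-- `y_k^⟨d⟩ = t^d y_k + [d]_t` in the free algebra. -/
def ydot (R : Type*) [CommRing R] (t : Rˣ) {n e : ℕ} (d : ℤ) (k : Fin n) :
    FreeAlgebra R (KLRGen n e) :=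
  algebraMap R _ ((t ^ d : Rˣ) : R) * kY R k + algebraMap R _ (qintU t d)

/-- `ρ_r(i) = î_r - î_{r+1}` for `i ∈ I^n`. -/
def rhoI {n e : ℕ} (i : Fin n → ZMod e) (r : Fin (n - 1)) : ℤ :=
  ((i (pL r)).val : ℤ) - ((i (pR r)).val : ℤ)

/-- The defining relations of the deformed cyclotomic quiver Hecke algebra `R_n(O)`. -/
inductive DefKLRRel (R : Type*) [CommRing R] (t : Rˣ) (n e ℓ : ℕ) [NeZero e] (κ : ℕ → ℤ) :
    FreeAlgebra R (KLRGen n e) → FreeAlgebra R (KLRGen n e) → Prop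
  | cyc (h : 0 < n) (i : Fin n → ZMod e) :
      DefKLRRel R t n e ℓ κ
        ((((List.range ℓ).map fun l =>
            if ((κ l : ZMod e) = i ⟨0, h⟩) then
              kY R (⟨0, h⟩ : Fin n) -
                algebraMap R _ (qintU t (κ l - ((i ⟨0, h⟩).val : ℤ)))
            else 1).prod) * kE R i) 0
  | orth (i j : Fin n → ZMod e) (h : i ≠ j) : DefKLRRel R t n e ℓ κ (kE R i * kE R j) 0
  | idem (i : Fin n → ZMod e) : DefKLRRel R t n e ℓ κ (kE R i * kE R i) (kE R i)
  | complete : DefKLRRel R t n e ℓ κ (∑ i : Fin n → ZMod e, kE R i) 1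
  | yE (k : Fin n) (i : Fin n → ZMod e) :
      DefKLRRel R t n e ℓ κ (kY R k * kE R i) (kE R i * kY R k)
  | psiE (r : Fin (n - 1)) (i : Fin n → ZMod e) :
      DefKLRRel R t n e ℓ κ (kPsi R r * kE R i) (kE R (swapSeq i r) * kPsi R r)
  | yy (k m : Fin n) : DefKLRRel R t n e ℓ κ (kY R k * kY R m) (kY R m * kY R k)
  | psiyEq (r : Fin (n - 1)) (i : Fin n → ZMod e) (h : i (pL r) = i (pR r)) :
      DefKLRRel R t n e ℓ κ (kPsi R r * kY R (pR r) * kE R i)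
        ((kY R (pL r) * kPsi R r + 1) * kE R i)
  | psiyNe (r : Fin (n - 1)) (i : Fin n → ZMod e) (h : i (pL r) ≠ i (pR r)) :
      DefKLRRel R t n e ℓ κ (kPsi R r * kY R (pR r) * kE R i)
        (kY R (pL r) * kPsi R r * kE R i)
  | ypsiEq (r : Fin (n - 1)) (i : Fin n → ZMod e) (h : i (pL r) = i (pR r)) :
      DefKLRRel R t n e ℓ κ (kY R (pR r) * kPsi R r * kE R i)
        ((kPsi R r * kY R (pL r) + 1) * kE R i)
  | ypsiNe (r : Fin (n - 1)) (i : Fin n → ZMod e) (h : i (pL r) ≠ i (pR r)) :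
      DefKLRRel R t n e ℓ κ (kY R (pR r) * kPsi R r * kE R i)
        (kPsi R r * kY R (pL r) * kE R i)
  | psiyFar (r : Fin (n - 1)) (k : Fin n) (h : k.1 ≠ r.1 ∧ k.1 ≠ r.1 + 1) :
      DefKLRRel R t n e ℓ κ (kPsi R r * kY R k) (kY R k * kPsi R r)
  | psipsiFar (r s : Fin (n - 1)) (h : r.1 + 1 < s.1 ∨ s.1 + 1 < r.1) :
      DefKLRRel R t n e ℓ κ (kPsi R r * kPsi R s) (kPsi R s * kPsi R r)
  | quadEq (r : Fin (n - 1)) (i : Fin n → ZMod e) (h : i (pL r) = i (pR r)) :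
      DefKLRRel R t n e ℓ κ (kPsi R r ^ 2 * kE R i) 0
  | quadR (r : Fin (n - 1)) (i : Fin n → ZMod e)
      (h1 : i (pR r) = i (pL r) + 1) (h2 : i (pL r) ≠ i (pR r) + 1) :
      DefKLRRel R t n e ℓ κ (kPsi R r ^ 2 * kE R i)
        ((ydot R t (1 + rhoI i r) (pL r) - kY R (pR r)) * kE R i)
  | quadL (r : Fin (n - 1)) (i : Fin n → ZMod e)
      (h1 : i (pL r) = i (pR r) + 1) (h2 : i (pR r) ≠ i (pL r) + 1) :
      DefKLRRel R t n e ℓ κ (kPsi R r ^ 2 * kE R i)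
        ((ydot R t (1 - rhoI i r) (pR r) - kY R (pL r)) * kE R i)
  | quadBoth (r : Fin (n - 1)) (i : Fin n → ZMod e)
      (h1 : i (pR r) = i (pL r) + 1) (h2 : i (pL r) = i (pR r) + 1) :
      DefKLRRel R t n e ℓ κ (kPsi R r ^ 2 * kE R i)
        ((ydot R t (1 + rhoI i r) (pL r) - kY R (pR r)) *
          (ydot R t (1 - rhoI i r) (pR r) - kY R (pL r)) * kE R i)
  | quadNone (r : Fin (n - 1)) (i : Fin n → ZMod e) (h1 : i (pL r) ≠ i (pR r))
      (h2 : i (pR r) ≠ i (pL r) + 1) (h3 : i (pL r) ≠ i (pR r) + 1) :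
      DefKLRRel R t n e ℓ κ (kPsi R r ^ 2 * kE R i) (kE R i)
  | braidBoth (r : Fin (n - 1)) (hr : r.1 + 1 < n - 1) (i : Fin n → ZMod e)
      (h0 : i (pM r hr) = i (pL r)) (h1 : i (pR r) = i (pL r) + 1)
      (h2 : i (pL r) = i (pR r) + 1) :
      DefKLRRel R t n e ℓ κ
        ((kPsi R r * kPsi R ⟨r.1 + 1, hr⟩ * kPsi R r -
            kPsi R ⟨r.1 + 1, hr⟩ * kPsi R r * kPsi R ⟨r.1 + 1, hr⟩) * kE R i)
        ((ydot R t (1 + rhoI i r) (pL r) + ydot R t (1 + rhoI i r) (pM r hr) -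
            ydot R t (1 + rhoI i r) (pR r) - ydot R t (1 - rhoI i r) (pR r)) * kE R i)
  | braidR (r : Fin (n - 1)) (hr : r.1 + 1 < n - 1) (i : Fin n → ZMod e)
      (h0 : i (pM r hr) = i (pL r)) (h1 : i (pR r) = i (pL r) + 1)
      (h2 : i (pL r) ≠ i (pR r) + 1) :
      DefKLRRel R t n e ℓ κ
        ((kPsi R r * kPsi R ⟨r.1 + 1, hr⟩ * kPsi R r -
            kPsi R ⟨r.1 + 1, hr⟩ * kPsi R r * kPsi R ⟨r.1 + 1, hr⟩) * kE R i)
        (algebraMap R _ (-(((t ^ (1 + rhoI i r) : Rˣ) : R))) * kE R i)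
  | braidL (r : Fin (n - 1)) (hr : r.1 + 1 < n - 1) (i : Fin n → ZMod e)
      (h0 : i (pM r hr) = i (pL r)) (h1 : i (pL r) = i (pR r) + 1)
      (h2 : i (pR r) ≠ i (pL r) + 1) :
      DefKLRRel R t n e ℓ κ
        ((kPsi R r * kPsi R ⟨r.1 + 1, hr⟩ * kPsi R r -
            kPsi R ⟨r.1 + 1, hr⟩ * kPsi R r * kPsi R ⟨r.1 + 1, hr⟩) * kE R i)
        (kE R i)
  | braidNone (r : Fin (n - 1)) (hr : r.1 + 1 < n - 1) (i : Fin n → ZMod e)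
      (h : ¬(i (pM r hr) = i (pL r) ∧
        (i (pR r) = i (pL r) + 1 ∨ i (pL r) = i (pR r) + 1))) :
      DefKLRRel R t n e ℓ κ
        ((kPsi R r * kPsi R ⟨r.1 + 1, hr⟩ * kPsi R r -
            kPsi R ⟨r.1 + 1, hr⟩ * kPsi R r * kPsi R ⟨r.1 + 1, hr⟩) * kE R i) 0

/-- The deformed cyclotomic quiver Hecke algebra `R_n(R)`. -/
noncomputable abbrev DefKLR (R : Type*) [CommRing R] (t : Rˣ) (n e ℓ : ℕ) [NeZero e]
    (κ : ℕ → ℤ) : Type _ :=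
  RingQuot (DefKLRRel R t n e ℓ κ)

/-- The generator `f_i` of the deformed cyclotomic quiver Hecke algebra. -/
noncomputable def DfGen (R : Type*) [CommRing R] (t : Rˣ) (n e ℓ : ℕ) [NeZero e]
    (κ : ℕ → ℤ) (i : Fin n → ZMod e) : DefKLR R t n e ℓ κ :=
  RingQuot.mkAlgHom R (DefKLRRel R t n e ℓ κ) (kE R i)

/-- The generator `ψ_r` of the deformed cyclotomic quiver Hecke algebra. -/
noncomputable def DpsiGen (R : Type*) [CommRing R] (t : Rˣ) (n e ℓ : ℕ) [NeZero e]
    (κ : ℕ → ℤ) (r : Fin (n - 1)) : DefKLR R t n e ℓ κ :=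
  RingQuot.mkAlgHom R (DefKLRRel R t n e ℓ κ) (kPsi R r)

/-- The generator `y_k` of the deformed cyclotomic quiver Hecke algebra. -/
noncomputable def DyGen (R : Type*) [CommRing R] (t : Rˣ) (n e ℓ : ℕ) [NeZero e]
    (κ : ℕ → ℤ) (k : Fin n) : DefKLR R t n e ℓ κ :=
  RingQuot.mkAlgHom R (DefKLRRel R t n e ℓ κ) (kY R k)

/-! ## Seminormal idempotents -/

/-- The seminormal idempotent `F_T` of the semisimple cyclotomic Hecke algebra:
`F_T = ∏_{k=1}^n ∏_{c ∈ Cont(n), [c_k(T)] ≠ [c]} (L_k - [c]) / ([c_k(T)] - [c])`. -/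
noncomputable def Fidem (K : Type*) [Field K] (tK : Kˣ) (n ℓ : ℕ) (κ : ℕ → ℤ)
    (T : StdTableau ℓ n) : CycHecke K tK n ℓ κ :=
  ((List.finRange n).map (fun k =>
    (((contFinset ℓ n κ).sort (· ≤ ·)).map (fun c =>
      if qint (tK : K) (content κ T (k.1 + 1)) ≠ qint (tK : K) c then
        (Lgen K tK n ℓ κ k - algebraMap K _ (qint (tK : K) c)) *
          algebraMap K _ ((qint (tK : K) (content κ T (k.1 + 1)) - qint (tK : K) c)⁻¹)
      else 1)).prod)).prod

/-- The residue idempotent `f_i = Σ_{T ∈ Std(i)} F_T`. -/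
noncomputable def fres (K : Type*) [Field K] (tK : Kˣ) (n ℓ e : ℕ) (κ : ℕ → ℤ)
    (i : Fin n → ZMod e) : CycHecke K tK n ℓ κ :=
  ∑ᶠ T : {T : StdTableau ℓ n // resSeq e κ T = i}, Fidem K tK n ℓ κ T.1

/-- The simultaneous two-sided eigenspace `H_{S,T}` of the Jucys–Murphy elements. -/
noncomputable def eigSub (K : Type*) [Field K] (tK : Kˣ) (n ℓ : ℕ) (κ : ℕ → ℤ)
    (S T : StdTableau ℓ n) : Submodule K (CycHecke K tK n ℓ κ) where
  carrier := {h | ∀ k : Fin n,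
      Lgen K tK n ℓ κ k * h = qint (tK : K) (content κ S (k.1 + 1)) • h ∧
      h * Lgen K tK n ℓ κ k = qint (tK : K) (content κ T (k.1 + 1)) • h}
  add_mem' := by
    intro a b ha hb
    intro k
    obtain ⟨h1, h2⟩ := ha k
    obtain ⟨h3, h4⟩ := hb k
    exact ⟨by rw [mul_add, h1, h3, smul_add], by rw [add_mul, h2, h4, smul_add]⟩
  zero_mem' := by intro k; simp
  smul_mem' := by
    intro c a ha
    intro k
    obtain ⟨h1, h2⟩ := ha k
    constructor
    · rw [mul_smul_comm, h1, smul_comm]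
    · rw [smul_mul_assoc, h2, smul_comm]

end Paper

namespace Paper

/-- The coefficients `β_r(T)` of (4.12)/(E:beta), defined from a seminormal coefficient
`α = α_r(T)` by the residue cases. -/
noncomputable def betaDef {K : Type*} [Field K] (e : ℕ) {ℓ n : ℕ} (κ : ℕ → ℤ) (t : Kˣ)
    (α : K) (T : StdTableau ℓ n) (r : ℕ) : K :=
  if ((content κ T r : ZMod e) = (content κ T (r + 1) : ZMod e)) then
    (t : K) ^ ((((content κ T r : ZMod e)).val : ℤ) - content κ T r) * α /
      qint (t : K) (1 - rhoTab κ T r)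
  else if ((content κ T r : ZMod e) = (content κ T (r + 1) : ZMod e) + 1) then
    (t : K) ^ (content κ T (r + 1) - (((content κ T r : ZMod e)).val : ℤ)) * α *
      qint (t : K) (rhoTab κ T r)
  else
    (t : K) ^ (-(rhoTab κ T r)) * α * qint (t : K) (rhoTab κ T r) /
      qint (t : K) (1 - rhoTab κ T r)

/-!
Interchanging `r` and `r + 1` in a tableau interchanges the contents of the two entries, so
`ρ_r(u) = -ρ_r(s)`, and after clearing denominators the hypothesis on `α_r(s) α_r(u)` reads
`α_r(s) α_r(u) [ρ] [-ρ] = [1 + ρ] [1 - ρ]` with `ρ = ρ_r(s)`. Each formula for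
`β_r(s) β_r(u)` is this relation multiplied by a power of `t` and divided by those of
`[1 ± ρ]` and `[±ρ]` that the residues select; `[-ρ] = -t^{-ρ} [ρ]` accounts for the sign in
the case of equal residues.

The denominators do not vanish because the nodes of `r` and `r + 1` are incomparable when both
tableaux are standard: if they lie in the same component then `2 ≤ |ρ| < n`, so `[n]!_t ≠ 0`
applies, and otherwise `ρ` differs by less than `n - 1` from a difference of charges.
-/

section QuantumInteger

variable {K : Type*} [Field K] {t : K}

lemma qint_natCast (t : K) (m : ℕ) : qint t (m : ℤ) = ∑ k ∈ Finset.range m, t ^ k := by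
  simp [qint]

lemma qint_neg_natCast (t : K) (m : ℕ) :
    qint t (-(m : ℤ)) = -∑ k ∈ Finset.range m, t ^ (-((k : ℤ) + 1)) := by
  rcases m.eq_zero_or_pos with rfl | hm
  · simp [qint]
  · rw [qint, if_neg (by omega), neg_neg, Int.toNat_natCast]

lemma qint_neg (ht : t ≠ 0) (d : ℤ) : qint t (-d) = -(t ^ (-d) * qint t d) := by
  have neg_natCast (m : ℕ) : qint t (-(m : ℤ)) = -(t ^ (-(m : ℤ)) * qint t m) := by
    rw [qint_neg_natCast, qint_natCast, Finset.mul_sum, ← Finset.sum_range_reflect]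
    refine congrArg _ (Finset.sum_congr rfl fun k hk => ?_)
    have hkm : k < m := Finset.mem_range.mp hk
    rw [← zpow_natCast, ← zpow_add₀ ht]
    congr 1
    omega
  obtain ⟨m, rfl | rfl⟩ := d.eq_nat_or_neg
  · exact neg_natCast m
  · rw [neg_natCast, neg_neg, mul_neg, neg_neg, ← mul_assoc, ← zpow_add₀ ht, add_neg_cancel,
      zpow_zero, one_mul]

lemma qint_neg_ne_zero (ht : t ≠ 0) {d : ℤ} : qint t (-d) ≠ 0 ↔ qint t d ≠ 0 := by
  simp [qint_neg ht, zpow_ne_zero, ht]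

end QuantumInteger

section Beta

variable {K : Type*} [Field K] {e : ℕ} {t a b : K} {c d : ℤ}

/-- The coefficient `β_r(s)` as a function of `α = α_r(s)` and of the contents `c = c_r(s)` and
`d = c_{r+1}(s)`, through which alone it depends on the tableau. The quantum integer
`[1 - ρ_r(s)]` is written `[1 + (d - c)]`, so that interchanging `c` and `d` turns it into
`[1 + (c - d)]` on the nose. -/
noncomputable def beta (e : ℕ) (t α : K) (c d : ℤ) : K :=
  if (c : ZMod e) = d then t ^ (((c : ZMod e).val : ℤ) - c) * α / qint t (1 + (d - c))
  else if (c : ZMod e) = d + 1 then t ^ (d - ((c : ZMod e).val : ℤ)) * α * qint t (c - d)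
  else t ^ (d - c) * α * qint t (c - d) / qint t (1 + (d - c))

lemma betaDef_eq_beta {ℓ n : ℕ} (e : ℕ) (κ : ℕ → ℤ) (t : Kˣ) (α : K) (T : StdTableau ℓ n)
    (r : ℕ) :
    betaDef e κ t α T r = beta e (t : K) α (content κ T r) (content κ T (r + 1)) := by
  simp only [betaDef, beta, rhoTab, neg_sub, sub_sub_eq_add_sub, add_sub_assoc]

/-- The relation between seminormal coefficients `a = α_r(s)` and `b = α_r(s(r,r+1))`, where
`c = c_r(s)` and `d = c_{r+1}(s)`, cleared of denominators. -/
def IsSeminormalPair (t a b : K) (c d : ℤ) : Prop :=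
  a * b * (qint t (c - d) * qint t (d - c)) = qint t (1 + (c - d)) * qint t (1 + (d - c))

lemma IsSeminormalPair.of_eq_div (h : a * b =
      qint t (1 + (c - d)) * qint t (1 + (d - c)) / (qint t (c - d) * qint t (d - c)))
    (hcd : qint t (c - d) ≠ 0) (hdc : qint t (d - c) ≠ 0) : IsSeminormalPair t a b c d := by
  rw [IsSeminormalPair, h, div_mul_cancel₀ _ (mul_ne_zero hcd hdc)]

lemma IsSeminormalPair.symm (h : IsSeminormalPair t a b c d) : IsSeminormalPair t b a d c := by
  rw [IsSeminormalPair, mul_comm b, mul_comm (qint t (d - c)), h, mul_comm]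

lemma IsSeminormalPair.beta_mul_beta_of_double_arrow [Nontrivial (ZMod e)]
    (hab : IsSeminormalPair t a b c d) (ht : t ≠ 0)
    (hcd : (d : ZMod e) = c + 1) (hdc : (c : ZMod e) = d + 1) :
    beta e t a c d * beta e t b d c =
      t ^ (c + d - ((c : ZMod e).val : ℤ) - ((d : ZMod e).val : ℤ)) *
        (qint t (1 + (d - c)) * qint t (1 + (c - d))) := by
  have hne : (c : ZMod e) ≠ d := by simp [hdc]
  rw [beta, beta, if_neg hne, if_pos hdc, if_neg hne.symm, if_pos hcd]
  generalize ((c : ZMod e).val : ℤ) = i, ((d : ZMod e).val : ℤ) = j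
  calc t ^ (d - i) * a * qint t (c - d) * (t ^ (c - j) * b * qint t (d - c))
      = t ^ (d - i) * t ^ (c - j) * (a * b * (qint t (c - d) * qint t (d - c))) := by ring
    _ = t ^ (c + d - i - j) * (qint t (1 + (d - c)) * qint t (1 + (c - d))) := by
      rw [hab, ← zpow_add₀ ht, mul_comm (qint t (1 + (c - d)))]
      ring_nf

lemma IsSeminormalPair.beta_mul_beta_of_arrow (hab : IsSeminormalPair t a b c d) (ht : t ≠ 0)
    (h1dc : qint t (1 + (d - c)) ≠ 0)
    (hcd : (d : ZMod e) = c + 1) (hdc : (c : ZMod e) ≠ d + 1) :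
    beta e t a c d * beta e t b d c =
      t ^ (d - ((d : ZMod e).val : ℤ)) * qint t (1 + (c - d)) := by
  have hne : (c : ZMod e) ≠ d := fun h => hdc (by rw [h, ← h, ← hcd, h])
  rw [beta, beta, if_neg hne, if_neg hdc, if_neg hne.symm, if_pos hcd]
  generalize ((d : ZMod e).val : ℤ) = j
  calc t ^ (d - c) * a * qint t (c - d) / qint t (1 + (d - c)) *
        (t ^ (c - j) * b * qint t (d - c))
      = t ^ (d - c) * t ^ (c - j) * (a * b * (qint t (c - d) * qint t (d - c))) /
          qint t (1 + (d - c)) := by ring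
    _ = t ^ (d - j) * qint t (1 + (c - d)) := by
      rw [hab, ← zpow_add₀ ht, sub_add_sub_cancel, ← mul_assoc, mul_div_cancel_right₀ _ h1dc]

lemma IsSeminormalPair.beta_mul_beta_of_eq (hab : IsSeminormalPair t a b c d) (ht : t ≠ 0)
    (hcd : qint t (c - d) ≠ 0) (h1cd : qint t (1 + (c - d)) ≠ 0)
    (h1dc : qint t (1 + (d - c)) ≠ 0) (h : (c : ZMod e) = d) :
    beta e t a c d * beta e t b d c =
      -t ^ (2 * ((c : ZMod e).val : ℤ) - 2 * d) / qint t (c - d) ^ 2 := by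
  rw [beta, beta, if_pos h, if_pos h.symm, ← h]
  generalize ((c : ZMod e).val : ℤ) = i
  have hneg : qint t (d - c) = -(t ^ (d - c) * qint t (c - d)) := by
    simpa only [neg_sub] using qint_neg ht (c - d)
  have hdc : qint t (d - c) ≠ 0 := by
    simpa only [neg_sub] using (qint_neg_ne_zero ht).mpr hcd
  have hmul : a * b / (qint t (1 + (c - d)) * qint t (1 + (d - c))) =
      1 / (qint t (c - d) * qint t (d - c)) := by
    rw [div_eq_div_iff (mul_ne_zero h1cd h1dc) (mul_ne_zero hcd hdc), hab, one_mul]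
  have hpow : t ^ (i - c) * t ^ (i - d) = t ^ (2 * i - 2 * d) * t ^ (d - c) := by
    rw [← zpow_add₀ ht, ← zpow_add₀ ht]
    ring_nf
  calc t ^ (i - c) * a / qint t (1 + (d - c)) * (t ^ (i - d) * b / qint t (1 + (c - d)))
      = t ^ (i - c) * t ^ (i - d) *
          (a * b / (qint t (1 + (c - d)) * qint t (1 + (d - c)))) := by ring
    _ = t ^ (2 * i - 2 * d) * t ^ (d - c) *
          (1 / (qint t (c - d) * -(t ^ (d - c) * qint t (c - d)))) := by
      rw [hpow, hmul, hneg]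
    _ = -t ^ (2 * i - 2 * d) / qint t (c - d) ^ 2 := by
      have := zpow_ne_zero (d - c) ht
      field_simp

lemma IsSeminormalPair.beta_mul_beta_of_not_adj (hab : IsSeminormalPair t a b c d) (ht : t ≠ 0)
    (h1cd : qint t (1 + (c - d)) ≠ 0) (h1dc : qint t (1 + (d - c)) ≠ 0)
    (hne : (c : ZMod e) ≠ d) (hcd : (d : ZMod e) ≠ c + 1) (hdc : (c : ZMod e) ≠ d + 1) :
    beta e t a c d * beta e t b d c = 1 := by
  rw [beta, beta, if_neg hne, if_neg hdc, if_neg hne.symm, if_neg hcd]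
  calc t ^ (d - c) * a * qint t (c - d) / qint t (1 + (d - c)) *
        (t ^ (c - d) * b * qint t (d - c) / qint t (1 + (c - d)))
      = t ^ (d - c) * t ^ (c - d) * (a * b * (qint t (c - d) * qint t (d - c))) /
          (qint t (1 + (c - d)) * qint t (1 + (d - c))) := by ring
    _ = 1 := by
      rw [hab, ← zpow_add₀ ht, sub_add_sub_cancel, sub_self, zpow_zero, one_mul,
        div_self (mul_ne_zero h1cd h1dc)]

end Beta

section Separation

variable {K : Type*} [Field K] {t : Kˣ} {n ℓ : ℕ} {κ : ℕ → ℤ}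

lemma SeparatesF.qint_ne_zero (hsep : SeparatesF t n ℓ κ) {d : ℤ} (hd₀ : d ≠ 0)
    (hd : |d| ≤ n) : qint (t : K) d ≠ 0 := by
  have hfactor := Finset.prod_ne_zero_iff.mp (left_ne_zero_of_mul hsep)
  obtain ⟨m, rfl | rfl⟩ := d.eq_nat_or_neg
  · exact hfactor m (Finset.mem_Icc.mpr (by grind))
  · exact (qint_neg_ne_zero t.ne_zero).mpr (hfactor m (Finset.mem_Icc.mpr (by grind)))

lemma SeparatesF.qint_charge_sub_add_ne_zero (hsep : SeparatesF t n ℓ κ) {l m : ℕ} (hl : l < ℓ)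
    (hm : m < ℓ) (hlm : l ≠ m) {d : ℤ} (hd : |d| < n) : qint (t : K) (κ l - κ m + d) ≠ 0 := by
  wlog hlt : l < m generalizing l m d
  · rw [← qint_neg_ne_zero t.ne_zero]
    have hswap := this hm hl hlm.symm (d := -d) (by rwa [abs_neg]) (by omega)
    rwa [show -(κ l - κ m + d) = κ m - κ l + -d by ring]
  have hfactor := right_ne_zero_of_mul hsep
  simp only [Finset.prod_ne_zero_iff] at hfactor
  exact hfactor l (Finset.mem_range.mpr hl) m (Finset.mem_Ioo.mpr ⟨hlt, hm⟩) d
    (Finset.mem_Ioo.mpr (abs_lt.mp hd))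

end Separation

section Tableau

variable {ℓ n : ℕ}

namespace Multipartition

variable {μ : Multipartition ℓ n} {l r c : ℕ}

lemma mem_diagram : (l, r, c) ∈ μ.diagram ↔ c < μ.part l r := Iff.rfl

lemma mem_diagram_of_le {r' c' : ℕ} (h : (l, r', c') ∈ μ.diagram) (hr : r ≤ r') (hc : c ≤ c') :
    (l, r, c) ∈ μ.diagram :=
  hc.trans_lt (h.trans_le (μ.antitone l hr))

lemma lt_of_mem_diagram (h : (l, r, c) ∈ μ.diagram) : l < ℓ := by
  by_contra! hl
  simp [mem_diagram, μ.comp_bound l hl] at h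

end Multipartition

lemma swapEntry_swapEntry (f : Node → ℕ) (r : ℕ) : swapEntry (swapEntry f r) r = f := by
  ext A
  simp only [swapEntry]
  grind

namespace StdTableau

variable {T S U : StdTableau ℓ n} {l m r c r' c' : ℕ}

lemma entry_le_entry (h : (l, r', c') ∈ T.shape.diagram) (hr : r ≤ r') (hc : c ≤ c') :
    T.entry (l, r, c) ≤ T.entry (l, r', c') := by
  have row : T.entry (l, r, c) ≤ T.entry (l, r, c') := by
    replace h := Multipartition.mem_diagram_of_le h hr le_rfl
    induction c', hc using Nat.le_induction with
    | base => rfl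
    | succ x _ ih =>
      exact (ih (Multipartition.mem_diagram_of_le h le_rfl x.le_succ)).trans
        (T.row_inc l r x h).le
  have column : T.entry (l, r, c') ≤ T.entry (l, r', c') := by
    induction r', hr using Nat.le_induction with
    | base => rfl
    | succ x _ ih =>
      exact (ih (Multipartition.mem_diagram_of_le h x.le_succ le_rfl)).trans
        (T.col_inc l x c' h).le
  exact row.trans column

lemma card_le_of_subset_diagram (T : StdTableau ℓ n) {s : Finset Node}
    (hs : ∀ A ∈ s, A ∈ T.shape.diagram) : s.card ≤ n := by
  simpa using Finset.card_le_card_of_injOn (t := Finset.Icc 1 n) T.entry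
    (fun A hA => by simpa using T.bijOn.mapsTo (hs A hA)) (T.bijOn.injOn.mono hs)

lemma col_add_card_lt (h : (l, r, c) ∈ T.shape.diagram) (h' : (m, r', c') ∈ T.shape.diagram)
    {s : Finset ℕ} (hs : ∀ i ∈ s, i ≤ r') (hlm : l = m → 0 ∉ s) : c + s.card < n := by
  -- `s` selects rows of the first column of component `m`, so only the corner in row `0` can
  -- also lie in the first row of component `l`.
  set arm : Finset Node := {l} ×ˢ {0} ×ˢ Finset.range (c + 1) with harm
  set leg : Finset Node := {m} ×ˢ s ×ˢ {0} with hleg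
  have hdisj : Disjoint arm leg := by
    rw [Finset.disjoint_left]
    grind
  have hcard : (arm ∪ leg).card ≤ n := T.card_le_of_subset_diagram fun A hA => by
    obtain ⟨k, i, j⟩ := A
    have hA : (k = l ∧ i = 0 ∧ j ≤ c) ∨ (k = m ∧ i ≤ r' ∧ j = 0) := by grind
    rcases hA with ⟨rfl, rfl, hj⟩ | ⟨rfl, hi, rfl⟩
    · exact Multipartition.mem_diagram_of_le h r.zero_le hj
    · exact Multipartition.mem_diagram_of_le h' hi c'.zero_le
  rw [Finset.card_union_of_disjoint hdisj] at hcard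
  simp only [harm, hleg, Finset.card_product, Finset.card_singleton, Finset.card_range] at hcard
  omega

lemma col_add_row_lt (h : (l, r, c) ∈ T.shape.diagram) (h' : (m, r', c') ∈ T.shape.diagram) :
    c + r' < n := by
  simpa using col_add_card_lt h h' (s := Finset.Ioc 0 r') (by simp) (by simp)

lemma col_add_row_add_one_lt (h : (l, r, c) ∈ T.shape.diagram)
    (h' : (m, r', c') ∈ T.shape.diagram) (hlm : l ≠ m) : c + r' + 1 < n := by
  simpa [add_assoc] using col_add_card_lt h h' (s := Finset.range (r' + 1))
    (by simp) (absurd · hlm)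

lemma node_mem_diagram {k : ℕ} (hk : k ∈ Set.Icc 1 n) : T.node k ∈ T.shape.diagram :=
  Function.invFunOn_mem (T.bijOn.surjOn hk)

lemma entry_node {k : ℕ} (hk : k ∈ Set.Icc 1 n) : T.entry (T.node k) = k :=
  Function.invFunOn_eq (T.bijOn.surjOn hk)

lemma node_entry {A : Node} (hA : A ∈ T.shape.diagram) : T.node (T.entry A) = A :=
  T.bijOn.injOn.leftInvOn_invFunOn hA

lemma not_le_of_node_eq {j k : ℕ} (hj : j ∈ Set.Icc 1 n) (hk : k ∈ Set.Icc 1 n) (hjk : j < k)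
    (hnj : T.node j = (l, r, c)) (hnk : T.node k = (l, r', c')) : ¬(r' ≤ r ∧ c' ≤ c) := by
  rintro ⟨hr, hc⟩
  have hle := entry_le_entry (hnj ▸ node_mem_diagram hj) hr hc
  rw [← hnj, ← hnk, entry_node hj, entry_node hk] at hle
  omega

/-- `S.IsSwap U r` says that the standard tableau `U` is `S(r, r+1)`. -/
structure IsSwap (S U : StdTableau ℓ n) (r : ℕ) : Prop where
  one_le : 1 ≤ r
  lt : r < n
  shape_eq : U.shape = S.shape
  entry_eq : U.entry = swapEntry S.entry r

namespace IsSwap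

lemma symm (h : S.IsSwap U r) : U.IsSwap S r where
  one_le := h.one_le
  lt := h.lt
  shape_eq := h.shape_eq.symm
  entry_eq := by rw [h.entry_eq, swapEntry_swapEntry]

lemma left_mem_Icc (h : S.IsSwap U r) : r ∈ Set.Icc 1 n := ⟨h.one_le, h.lt.le⟩

lemma right_mem_Icc (h : S.IsSwap U r) : r + 1 ∈ Set.Icc 1 n := ⟨by omega, h.lt⟩

lemma node_left (h : S.IsSwap U r) : U.node r = S.node (r + 1) := by
  have hmem : S.node (r + 1) ∈ U.shape.diagram :=
    h.shape_eq ▸ node_mem_diagram h.right_mem_Icc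
  have hentry : U.entry (S.node (r + 1)) = r := by
    simp [h.entry_eq, swapEntry, entry_node h.right_mem_Icc]
  rw [← node_entry hmem, hentry]

lemma content_left (h : S.IsSwap U r) (κ : ℕ → ℤ) : content κ U r = content κ S (r + 1) := by
  rw [content, content, h.node_left]

lemma content_right (h : S.IsSwap U r) (κ : ℕ → ℤ) : content κ U (r + 1) = content κ S r :=
  (h.symm.content_left κ).symm

lemma rhoTab_eq (h : S.IsSwap U r) (κ : ℕ → ℤ) :
    rhoTab κ U r = content κ S (r + 1) - content κ S r := by
  rw [rhoTab, h.content_left, h.content_right]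

lemma two_le_abs_rhoTab (h : S.IsSwap U r) (κ : ℕ → ℤ)
    (hcomp : (S.node r).1 = (S.node (r + 1)).1) : 2 ≤ |rhoTab κ S r| := by
  obtain ⟨⟨l, a, b⟩, hA⟩ : ∃ A, S.node r = A := ⟨_, rfl⟩
  obtain ⟨⟨m, a', b'⟩, hB⟩ : ∃ B, S.node (r + 1) = B := ⟨_, rfl⟩
  obtain rfl : l = m := by simpa [hA, hB] using hcomp
  have hBA : ¬(a' ≤ a ∧ b' ≤ b) :=
    not_le_of_node_eq h.left_mem_Icc h.right_mem_Icc r.lt_succ_self hA hB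
  have hAB : ¬(a ≤ a' ∧ b ≤ b') :=
    not_le_of_node_eq h.left_mem_Icc h.right_mem_Icc r.lt_succ_self
      (h.node_left.trans hB) (h.symm.node_left.symm.trans hA)
  simp only [rhoTab, content, hA, hB]
  grind

variable {K : Type*} [Field K] {t : Kˣ} {κ : ℕ → ℤ}

lemma qint_add_rhoTab_ne_zero (h : S.IsSwap U r) (hsep : SeparatesF t n ℓ κ) {δ : ℤ}
    (hδ : |δ| ≤ 1) : qint (t : K) (δ + rhoTab κ S r) ≠ 0 := by
  have htwo := h.two_le_abs_rhoTab κ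
  have hA_mem := S.node_mem_diagram h.left_mem_Icc
  have hB_mem := S.node_mem_diagram h.right_mem_Icc
  simp only [rhoTab, content] at htwo ⊢
  generalize S.node r = A, S.node (r + 1) = B at htwo hA_mem hB_mem ⊢
  obtain ⟨l, a, b⟩ := A
  obtain ⟨m, a', b'⟩ := B
  by_cases hlm : l = m
  · have hba' : b + a' < n := col_add_row_lt hA_mem hB_mem
    have hb'a : b' + a < n := col_add_row_lt hB_mem hA_mem
    exact hsep.qint_ne_zero (by grind) (by grind)
  · have hba' : b + a' + 1 < n := col_add_row_add_one_lt hA_mem hB_mem hlm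
    have hb'a : b' + a + 1 < n := col_add_row_add_one_lt hB_mem hA_mem (Ne.symm hlm)
    convert hsep.qint_charge_sub_add_ne_zero (Multipartition.lt_of_mem_diagram hA_mem)
      (Multipartition.lt_of_mem_diagram hB_mem) hlm
      (d := (b - a) - (b' - a') + δ) (by grind) using 2
    ring

lemma qint_rhoTab_ne_zero (h : S.IsSwap U r) (hsep : SeparatesF t n ℓ κ) :
    qint (t : K) (rhoTab κ S r) ≠ 0 := by
  simpa only [zero_add] using h.qint_add_rhoTab_ne_zero hsep (δ := 0) (by simp)

lemma qint_one_add_rhoTab_ne_zero (h : S.IsSwap U r) (hsep : SeparatesF t n ℓ κ) :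
    qint (t : K) (1 + rhoTab κ S r) ≠ 0 :=
  h.qint_add_rhoTab_ne_zero hsep (by simp)

lemma isSeminormalPair (h : S.IsSwap U r) (hsep : SeparatesF t n ℓ κ) {a b : K}
    (hab : a * b = qint (t : K) (1 + rhoTab κ S r) * qint (t : K) (1 + rhoTab κ U r) /
      (qint (t : K) (rhoTab κ S r) * qint (t : K) (rhoTab κ U r))) :
    IsSeminormalPair (t : K) a b (content κ S r) (content κ S (r + 1)) := by
  have hU := h.symm.qint_rhoTab_ne_zero hsep
  rw [h.rhoTab_eq] at hab hU
  exact .of_eq_div hab (h.qint_rhoTab_ne_zero hsep) hU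

end IsSwap

end StdTableau

end Tableau

/-- Lemma L:BetaSquared: for `u = s·(r, r+1)` standard and a
seminormal coefficient system, the products `β_r(s)β_r(u)` are given by the quiver
cases. -/
theorem beta_squared (n ℓ e : ℕ) (hℓ : 1 ≤ ℓ) (he : 2 ≤ e) (κ : ℕ → ℤ)
    (K : Type) [Field K] (t : Kˣ) (hsep : SeparatesF t n ℓ κ)
    (S U : StdTableau ℓ n) (r : ℕ) (hr1 : 1 ≤ r) (hrn : r < n)
    (hshape : U.shape = S.shape) (hU : U.entry = swapEntry S.entry r)
    (αs αu : K)
    (hα : αs * αu = qint (t : K) (1 + rhoTab κ S r) * qint (t : K) (1 + rhoTab κ U r) /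
        (qint (t : K) (rhoTab κ S r) * qint (t : K) (rhoTab κ U r)))
    (ci cj : ℤ) (hci : ci = content κ S r) (hcj : cj = content κ S (r + 1)) :
    (((cj : ZMod e) = (ci : ZMod e) + 1 ∧ (ci : ZMod e) = (cj : ZMod e) + 1 →
      betaDef e κ t αs S r * betaDef e κ t αu U r =
        (t : K) ^ (ci + cj - (((ci : ZMod e)).val : ℤ) - (((cj : ZMod e)).val : ℤ)) *
          (qint (t : K) (1 - (ci - cj)) * qint (t : K) (1 + (ci - cj))))) ∧
    (((cj : ZMod e) = (ci : ZMod e) + 1 ∧ (ci : ZMod e) ≠ (cj : ZMod e) + 1 →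
      betaDef e κ t αs S r * betaDef e κ t αu U r =
        (t : K) ^ (cj - (((cj : ZMod e)).val : ℤ)) * qint (t : K) (1 + (ci - cj)))) ∧
    (((ci : ZMod e) = (cj : ZMod e) + 1 ∧ (cj : ZMod e) ≠ (ci : ZMod e) + 1 →
      betaDef e κ t αs S r * betaDef e κ t αu U r =
        (t : K) ^ (ci - (((ci : ZMod e)).val : ℤ)) * qint (t : K) (1 - (ci - cj)))) ∧
    (((ci : ZMod e) = (cj : ZMod e) →
      betaDef e κ t αs S r * betaDef e κ t αu U r =
        -((t : K) ^ (2 * (((ci : ZMod e)).val : ℤ) - 2 * cj)) /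
          (qint (t : K) (ci - cj)) ^ 2)) ∧
    ((ci : ZMod e) ≠ (cj : ZMod e) ∧ (cj : ZMod e) ≠ (ci : ZMod e) + 1 ∧
        (ci : ZMod e) ≠ (cj : ZMod e) + 1 →
      betaDef e κ t αs S r * betaDef e κ t αu U r = 1) := by
  have hswap : S.IsSwap U r := ⟨hr1, hrn, hshape, hU⟩
  have hρS : rhoTab κ S r = ci - cj := by rw [rhoTab, hci, hcj]
  have hρU : rhoTab κ U r = cj - ci := by rw [hswap.rhoTab_eq, hci, hcj]
  have hab : IsSeminormalPair (t : K) αs αu ci cj := by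
    rw [hci, hcj]
    exact hswap.isSeminormalPair hsep hα
  have hcd := hρS ▸ hswap.qint_rhoTab_ne_zero hsep
  have h1cd := hρS ▸ hswap.qint_one_add_rhoTab_ne_zero hsep
  have h1dc := hρU ▸ hswap.symm.qint_one_add_rhoTab_ne_zero hsep
  have : Fact (1 < e) := ⟨he⟩
  rw [betaDef_eq_beta, betaDef_eq_beta, hswap.content_left, hswap.content_right, ← hci, ← hcj,
    show 1 - (ci - cj) = 1 + (cj - ci) by ring]
  refine ⟨fun h => hab.beta_mul_beta_of_double_arrow t.ne_zero h.1 h.2,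
    fun h => hab.beta_mul_beta_of_arrow t.ne_zero h1dc h.1 h.2, fun h => ?_,
    hab.beta_mul_beta_of_eq t.ne_zero hcd h1cd h1dc,
    fun h => hab.beta_mul_beta_of_not_adj t.ne_zero h1cd h1dc h.1 h.2.1 h.2.2⟩
  rw [mul_comm]
  exact hab.symm.beta_mul_beta_of_arrow t.ne_zero h1cd h.1 h.2

end Paper
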